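/- (A priori estimate) Let Λ > 0 and let h : V → ℝ satisfy h ≥ 0, h ≢ 0, and Λ^{-1} ≤ h(x) ≤ Λ for every x ∈ V with h(x) ≠ 0. Let ρ ∈ ℝ with ρ ≠ 0 and |ρ| ≤ Λ. Then there exists a constant C, depending only on Λ and (V, μ, W), such that every solution v : V → ℝ of Lv = ρ h e^v − ρ/|V| on V satisfies |v(x)| ≤ C for all x ∈ V. -/

import Mathlib

open Real Finset

variable {V : Type*}

/-- Discrete integral: `∫_V f dμ = Σ_x μ(x) f(x)`. -/
noncomputable def intV [Fintype V] (μ f : V → ℝ) : ℝ := ∑ x, μ x * f x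

/-- Volume `|V| = Σ_x μ(x)`. -/
noncomputable def volV [Fintype V] (μ : V → ℝ) : ℝ := ∑ x, μ x

/-- The nonlocal (fractional graph Laplacian type) operator
`Lu(x) = (1/μ(x)) Σ_{y ≠ x} W(x,y)(u(x) − u(y))`. -/
noncomputable def opL [Fintype V] [DecidableEq V] (μ : V → ℝ) (W : V → V → ℝ)
    (u : V → ℝ) (x : V) : ℝ :=
  (1 / μ x) * ∑ y ∈ univ.filter (fun y => y ≠ x), W x y * (u x - u y)

/-- Gradient form `∇u·∇v(x) = (1/(2μ(x))) Σ_{y ≠ x} W(x,y)(u(x)−u(y))(v(x)−v(y))`. -/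
noncomputable def gradForm [Fintype V] [DecidableEq V] (μ : V → ℝ) (W : V → V → ℝ)
    (u v : V → ℝ) (x : V) : ℝ :=
  (1 / (2 * μ x)) * ∑ y ∈ univ.filter (fun y => y ≠ x), W x y * (u x - u y) * (v x - v y)

/-- `|∇u|²(x) = ∇u·∇u(x)`. -/
noncomputable def gradSq [Fintype V] [DecidableEq V] (μ : V → ℝ) (W : V → V → ℝ)
    (u : V → ℝ) (x : V) : ℝ := gradForm μ W u u x

/-!
Dividing the equation by `ρ` gives `Lw = h e^v - c` for `w = ρ⁻¹ v`, whatever the sign of `ρ`, with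
`c = 1/|V|`. Since `Lw ≥ -c`, evaluating `Lw` at a minimum of `w` bounds the oscillation of `w`, and
hence `Lw` from above. At a maximum `m` of `w` also `Lw ≥ 0`, so `h(m) e^{v(m)}` lies between two
positive constants. This forces `h(m) ≠ 0` and bounds `v(m)`, and the oscillation bound carries the
estimate from `m` to every other point.
-/

section

variable [Fintype V] {μ : V → ℝ}

lemma volV_pos [Nonempty V] (hμ : ∀ x, 0 < μ x) : 0 < volV μ :=
  sum_pos (fun x _ => hμ x) univ_nonempty

variable [DecidableEq V] {W : V → V → ℝ} {u : V → ℝ} {x : V}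

lemma opL_const_smul (μ : V → ℝ) (W : V → V → ℝ) (r : ℝ) (u : V → ℝ) (x : V) :
    opL μ W (r • u) x = r * opL μ W u x := by
  simp only [opL, Pi.smul_apply, smul_eq_mul, mul_sum]
  exact sum_congr rfl fun y _ => by ring

lemma opL_nonneg_of_forall_le (hμ : 0 ≤ μ x) (hW : ∀ y, y ≠ x → 0 ≤ W x y)
    (hu : ∀ y, u y ≤ u x) : 0 ≤ opL μ W u x :=
  mul_nonneg (one_div_nonneg.2 hμ) <| sum_nonneg fun y hy =>
    mul_nonneg (hW y (mem_filter.1 hy).2) (sub_nonneg.2 (hu y))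

lemma sub_le_div_of_neg_le_opL {c : ℝ} {y : V} (hμ : 0 < μ x) (hW : ∀ z, z ≠ x → 0 < W x z)
    (hu : ∀ z, u x ≤ u z) (hL : -c ≤ opL μ W u x) (hy : y ≠ x) :
    u y - u x ≤ c * μ x / W x y := by
  have hsingle : W x y * (u y - u x) ≤ ∑ z ∈ univ.filter (fun z => z ≠ x), W x z * (u z - u x) :=
    single_le_sum (f := fun z => W x z * (u z - u x))
      (fun z hz => mul_nonneg (hW z (mem_filter.1 hz).2).le (sub_nonneg.2 (hu z)))
      (mem_filter.2 ⟨mem_univ y, hy⟩)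
  have hsum : ∑ z ∈ univ.filter (fun z => z ≠ x), W x z * (u z - u x) = -opL μ W u x * μ x := by
    rw [opL, one_div, neg_mul, mul_right_comm, inv_mul_cancel₀ hμ.ne', one_mul, ← sum_neg_distrib]
    exact sum_congr rfl fun z _ => by ring
  rw [le_div_iff₀' (hW y hy)]
  calc W x y * (u y - u x) ≤ -opL μ W u x * μ x := hsingle.trans_eq hsum
    _ ≤ c * μ x := mul_le_mul_of_nonneg_right (neg_le.1 hL) hμ.le

lemma exists_forall_sub_le_of_neg_le_opL (hμ : ∀ x, 0 < μ x) (hW : ∀ x y, x ≠ y → 0 < W x y)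
    (c : ℝ) :
    ∃ K, ∀ u : V → ℝ, (∀ x, -c ≤ opL μ W u x) → ∀ x y, u x - u y ≤ K := by
  obtain ⟨K, hK⟩ := Finite.exists_le fun p : V × V => c * μ p.1 / W p.1 p.2
  refine ⟨max K 0, fun u hL x y => ?_⟩
  have : Nonempty V := ⟨x⟩
  obtain ⟨n, hn⟩ := Finite.exists_min u
  have hxn : u x - u n ≤ max K 0 := by
    rcases eq_or_ne x n with rfl | hx
    · simp
    · exact (sub_le_div_of_neg_le_opL (hμ n) (fun z hz => hW n z hz.symm) hn (hL n) hx).trans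
        ((hK (n, x)).trans (le_max_left K 0))
  linarith [hn y]

lemma exists_forall_opL_le (hμ : ∀ x, 0 ≤ μ x) (hW : ∀ x y, x ≠ y → 0 ≤ W x y) (K : ℝ) :
    ∃ M, ∀ u : V → ℝ, (∀ x y, u x - u y ≤ K) → ∀ x, opL μ W u x ≤ M := by
  obtain ⟨M, hM⟩ := Finite.exists_le fun x =>
    (1 / μ x) * ∑ y ∈ univ.filter (fun y => y ≠ x), W x y * K
  refine ⟨M, fun u hu x => le_trans ?_ (hM x)⟩
  refine mul_le_mul_of_nonneg_left (sum_le_sum fun y hy => ?_) (one_div_nonneg.2 (hμ x))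
  exact mul_le_mul_of_nonneg_left (hu x y) (hW x y (mem_filter.1 hy).2.symm)

lemma exists_forall_sub_le_and_exists_mem_Icc_of_opL_eq [Nonempty V] (hμ : ∀ x, 0 < μ x)
    (hW : ∀ x y, x ≠ y → 0 < W x y) (c : ℝ) :
    ∃ K M, ∀ f u : V → ℝ, (∀ x, 0 ≤ f x) → (∀ x, opL μ W u x = f x - c) →
      (∀ x y, u x - u y ≤ K) ∧ ∃ m, f m ∈ Set.Icc c M := by
  obtain ⟨K, hK⟩ := exists_forall_sub_le_of_neg_le_opL hμ hW c
  obtain ⟨M, hM⟩ := exists_forall_opL_le (fun x => (hμ x).le) (fun x y hxy => (hW x y hxy).le) K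
  refine ⟨K, M + c, fun f u hf hu => ?_⟩
  have hosc : ∀ x y, u x - u y ≤ K := hK u fun x => by linarith [hu x, hf x]
  obtain ⟨m, hm⟩ := Finite.exists_max u
  have hnonneg : 0 ≤ opL μ W u m :=
    opL_nonneg_of_forall_le (hμ m).le (fun y hy => (hW m y hy.symm).le) hm
  exact ⟨hosc, m, by linarith [hu m], by linarith [hu m, hM u hosc m]⟩

end

lemma abs_le_max_abs_log_of_mul_exp_mem_Icc {a b c M t s : ℝ} (ha : 0 < a) (hc : 0 < c)
    (ht : t ∈ Set.Icc a b) (hs : t * exp s ∈ Set.Icc c M) :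
    |s| ≤ max |log (c / b)| |log (M / a)| := by
  have hb : 0 < b := ha.trans_le (ht.1.trans ht.2)
  have hM : 0 < M := hc.trans_le (hs.1.trans hs.2)
  have hlower : c / b ≤ exp s := (div_le_iff₀' hb).2 <|
    hs.1.trans (mul_le_mul_of_nonneg_right ht.2 (exp_pos s).le)
  have hupper : exp s ≤ M / a := (le_div_iff₀' ha).2 <|
    (mul_le_mul_of_nonneg_right ht.1 (exp_pos s).le).trans hs.2
  exact abs_le_max_abs_abs ((log_le_iff_le_exp (div_pos hc hb)).2 hlower)
    ((le_log_iff_exp_le (div_pos hM ha)).2 hupper)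

theorem apriori_estimate_general [Fintype V] [Nonempty V] [DecidableEq V]
    {μ : V → ℝ} {W : V → V → ℝ} (hμ : ∀ x, 0 < μ x) (hW : ∀ x y, x ≠ y → 0 < W x y)
    (Λ : ℝ) {c : ℝ} (hc : 0 < c) :
    ∃ C : ℝ, ∀ (h : V → ℝ) (ρ : ℝ), (∀ x, h x ≠ 0 → Λ⁻¹ ≤ h x ∧ h x ≤ Λ) → ρ ≠ 0 → |ρ| ≤ Λ →
      ∀ v : V → ℝ, (∀ x, opL μ W v x = ρ * h x * exp (v x) - ρ * c) → ∀ x, |v x| ≤ C := by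
  obtain ⟨K, M, hKM⟩ := exists_forall_sub_le_and_exists_mem_Icc_of_opL_eq hμ hW c
  refine ⟨max |log (c / Λ)| |log (M / Λ⁻¹)| + Λ * K, fun h ρ hh hρ hρΛ v hv x => ?_⟩
  have hΛ : 0 < Λ := (abs_pos.2 hρ).trans_le hρΛ
  have hh0 (y : V) : 0 ≤ h y := by
    by_contra hy
    exact hy ((inv_pos.2 hΛ).le.trans (hh y (ne_of_not_ge hy)).1)
  have hL (y : V) : opL μ W (ρ⁻¹ • v) y = h y * exp (v y) - c := by
    rw [opL_const_smul, hv, mul_assoc, ← mul_sub, inv_mul_cancel_left₀ hρ]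
  obtain ⟨hosc, m, hm⟩ := hKM _ _ (fun y => mul_nonneg (hh0 y) (exp_pos (v y)).le) hL
  have hhm : h m ≠ 0 := left_ne_zero_of_mul (hc.trans_le hm.1).ne'
  have hvm : |v m| ≤ max |log (c / Λ)| |log (M / Λ⁻¹)| :=
    abs_le_max_abs_log_of_mul_exp_mem_Icc (inv_pos.2 hΛ) hc (hh m hhm) hm
  have hvx : |v x - v m| ≤ Λ * K := calc
    |v x - v m| = |ρ| * |(ρ⁻¹ • v) x - (ρ⁻¹ • v) m| := by
      rw [← abs_mul, Pi.smul_apply, Pi.smul_apply, ← smul_sub, smul_eq_mul,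
        mul_inv_cancel_left₀ hρ]
    _ ≤ Λ * K := mul_le_mul hρΛ (abs_sub_le_iff.2 ⟨hosc x m, hosc m x⟩) (abs_nonneg _) hΛ.le
  linarith [abs_sub_abs_le_abs_sub (v x) (v m)]

/-- (A priori estimate) Under the stated bounds on `h` and `ρ`, any solution `v` of
`Lv = ρ h e^v − ρ/|V|` satisfies a uniform bound `|v(x)| ≤ C`. -/
theorem apriori_estimate [Fintype V] [Nonempty V] [DecidableEq V]
    (μ : V → ℝ) (W : V → V → ℝ)
    (hμ : ∀ x, 0 < μ x)
    (hWsym : ∀ x y, W x y = W y x)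
    (hWpos : ∀ x y, x ≠ y → 0 < W x y)
    (Λ : ℝ) (hΛ : 0 < Λ) :
    ∃ C : ℝ, ∀ (h : V → ℝ) (ρ : ℝ),
      (∀ x, 0 ≤ h x) → (∃ x, h x ≠ 0) →
      (∀ x, h x ≠ 0 → Λ⁻¹ ≤ h x ∧ h x ≤ Λ) →
      ρ ≠ 0 → |ρ| ≤ Λ →
      ∀ v : V → ℝ,
        (∀ x, opL μ W v x = ρ * h x * Real.exp (v x) - ρ / volV μ) →
        ∀ x, |v x| ≤ C :=
  (apriori_estimate_general hμ hWpos Λ (inv_pos.2 (volV_pos hμ))).imp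
    fun _ hC h ρ _ _ hh hρ hρΛ v hv => hC h ρ hh hρ hρΛ v hv
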